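/- arXiv:math/0503050 — 3 statements merged into one kernel-verified Lean document; each statement's English description precedes it below -/
import Mathlib

section
/- Let m > 1 be a real number that is not an integer. Then there exist a positive integer r, a finite index set E, and vectors (v_e)_{e ∈ E} in ℚ^r such that, for the linear matroid M on E represented by these vectors (whose rank function is r(A) = dim_ℚ span{v_e : e ∈ A}), the collection of m-Laman independent subsets of E is NOT the collection of independent sets of any matroid on E. -/
/-!
An `m`-Laman independent set of rank `r` has at most `f r = ⌈m * r⌉ - 1` elements, and generic
vectors attain this bound. Suppose the `m`-Laman independent sets were always those of a matroid.
Take two subspaces of dimension `p + 1` that meet in dimension `p`. Submodularity of the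
matroid rank on the vectors lying in them then gives `f p + f (p + 2) ≤ 2 * f (p + 1)`.
If this holds for all large `p`, the increments of `f` form a non-increasing sequence of
natural numbers, hence are eventually constant. As `f r / r` tends to `m`, the constant is `m`,
and `m` is an integer.
-/

/-- The rank function of the linear matroid represented by vectors
`v : E → (Fin r → ℚ)`: the dimension of the span of `{v e : e ∈ A}`. -/
noncomputable def linRank {E : Type*} {r : ℕ} (v : E → (Fin r → ℚ)) (A : Set E) : ℕ :=
  Module.finrank ℚ (Submodule.span ℚ (v '' A))

/-- `A` is `m`-Laman independent for the linear matroid represented by `v` if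
`m * r(A') > |A'|` for every nonempty `A' ⊆ A`. -/
def LinLamanIndep {E : Type*} {r : ℕ} (v : E → (Fin r → ℚ)) (m : ℝ) (A : Set E) : Prop :=
  ∀ A' ⊆ A, A'.Nonempty → (A'.ncard : ℝ) < m * (linRank v A' : ℝ)

open Module Submodule

/-- The largest natural number less than `m * r`, which bounds the size of an `m`-Laman
independent set of rank `r`. The truncated subtraction gives `0` when `m * r ≤ 0`. -/
noncomputable def lamanBound (m : ℝ) (r : ℕ) : ℕ := ⌈m * r⌉₊ - 1

section LamanBound

variable {m : ℝ} {n r : ℕ}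

lemma le_lamanBound_iff (hn : n ≠ 0) : n ≤ lamanBound m r ↔ (n : ℝ) < m * r := by
  rw [← Nat.lt_ceil, lamanBound]
  omega

lemma lamanBound_le (hm : 0 ≤ m) (r : ℕ) : (lamanBound m r : ℝ) ≤ m * r := by
  by_cases h : lamanBound m r = 0
  · rw [h, Nat.cast_zero]
    positivity
  · exact ((le_lamanBound_iff h).1 le_rfl).le

lemma le_lamanBound_add_one (m : ℝ) (r : ℕ) : m * r ≤ lamanBound m r + 1 := by
  have hceil : ⌈m * r⌉₊ ≤ lamanBound m r + 1 := le_tsub_add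
  exact_mod_cast Nat.ceil_le.1 hceil

lemma lamanBound_mono (hm : 0 ≤ m) : Monotone (lamanBound m) := fun _ _ h ↦
  Nat.sub_le_sub_right (Nat.ceil_mono (by gcongr)) 1

lemma lamanBound_strictMono (hm : 1 < m) : StrictMono (lamanBound m) := by
  refine strictMono_nat_of_lt_succ fun r ↦ (le_lamanBound_iff (Nat.succ_ne_zero _)).2 ?_
  have := lamanBound_le (zero_le_one.trans hm.le) r
  push_cast
  linarith

lemma exists_add_mul_eq_of_concave {f : ℕ → ℕ} (hmono : Monotone f)
    (hconc : ∀ n, f n + f (n + 2) ≤ 2 * f (n + 1)) :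
    ∃ N d, ∀ j, f (N + j) = f N + j * d := by
  have hanti : Antitone fun n ↦ f (n + 1) - f n := antitone_nat_of_succ_le fun n ↦ by
    have := hconc n
    grind
  obtain ⟨N, hN⟩ := WellFoundedLT.antitone_chain_condition hanti
  refine ⟨N, f (N + 1) - f N, fun j ↦ ?_⟩
  induction j with
  | zero => simp
  | succ j ih =>
    have hstep := hN (N + j) (by omega)
    have hle := hmono (N + j).le_succ
    rw [Nat.succ_mul]
    grind

lemma eq_of_abs_add_mul_sub_le {a b x y C : ℝ} (h : ∀ j : ℕ, |(a + j * x) - (b + j * y)| ≤ C) :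
    x = y := by
  by_contra hne
  obtain ⟨j, hj⟩ := exists_nat_gt ((C + |a - b|) / |x - y|)
  rw [div_lt_iff₀ (abs_pos.2 (sub_ne_zero.2 hne))] at hj
  have habs : j * |x - y| ≤ |(a + j * x) - (b + j * y)| + |a - b| := by
    calc j * |x - y| = |((a + j * x) - (b + j * y)) - (a - b)| := by
          rw [← Nat.abs_cast j, ← abs_mul, Nat.abs_cast]
          ring_nf
      _ ≤ _ := abs_sub _ _
  linarith [h j]

lemma exists_lamanBound_not_concave (hm : 0 ≤ m) (hni : ∀ z : ℤ, (z : ℝ) ≠ m) (p₀ : ℕ) :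
    ∃ p ≥ p₀, 2 * lamanBound m (p + 1) < lamanBound m p + lamanBound m (p + 2) := by
  by_contra! hconc
  obtain ⟨N, d, hlin⟩ := exists_add_mul_eq_of_concave (f := fun n ↦ lamanBound m (p₀ + n))
    (fun _ _ h ↦ lamanBound_mono hm (by omega)) fun n ↦ hconc (p₀ + n) (by omega)
  refine hni d ?_
  rw [Int.cast_natCast]
  refine eq_of_abs_add_mul_sub_le (a := lamanBound m (p₀ + N)) (b := m * (p₀ + N)) (C := 1)
    fun j ↦ ?_
  have hcast : (lamanBound m (p₀ + (N + j)) : ℝ) = lamanBound m (p₀ + N) + j * d := by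
    exact_mod_cast hlin j
  have hle := lamanBound_le hm (p₀ + (N + j))
  have hge := le_lamanBound_add_one m (p₀ + (N + j))
  push_cast at hle hge
  rw [← hcast, abs_le]
  constructor <;> linarith

end LamanBound

section LinRank

variable {E : Type*} {r : ℕ} {v : E → Fin r → ℚ} {A B : Set E}

lemma linRank_mono (h : A ⊆ B) : linRank v A ≤ linRank v B :=
  finrank_mono (span_mono (Set.image_mono h))

lemma linRank_le_finrank {W : Submodule ℚ (Fin r → ℚ)} (h : ∀ e ∈ A, v e ∈ W) :
    linRank v A ≤ finrank ℚ W :=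
  finrank_mono (span_le.2 (Set.image_subset_iff.2 h))

lemma linRank_lt_of_notMem_span {e : E} (hAB : A ⊆ B) (heB : e ∈ B)
    (heA : v e ∉ span ℚ (v '' A)) : linRank v A < linRank v B :=
  finrank_lt_finrank_of_lt <| SetLike.lt_iff_le_and_exists.2
    ⟨span_mono (Set.image_mono hAB), v e, subset_span ⟨e, heB, rfl⟩, heA⟩

end LinRank

namespace LinLamanIndep

variable {E : Type*} {r : ℕ} {v : E → Fin r → ℚ} {m : ℝ} {A B : Set E}

lemma empty (v : E → Fin r → ℚ) (m : ℝ) : LinLamanIndep v m ∅ := fun _ hA' hne ↦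
  absurd (Set.subset_empty_iff.1 hA') hne.ne_empty

lemma mono (hB : LinLamanIndep v m B) (hAB : A ⊆ B) : LinLamanIndep v m A :=
  fun A' hA' hne ↦ hB A' (hA'.trans hAB) hne

lemma ncard_le (hA : LinLamanIndep v m A) : A.ncard ≤ lamanBound m (linRank v A) := by
  by_cases h : A.ncard = 0
  · simp [h]
  · exact (le_lamanBound_iff h).2 (hA A subset_rfl (Set.nonempty_of_ncard_ne_zero h))

lemma preimage {A : Set (Fin r → ℚ)} (hv : v.Injective) (hA : LinLamanIndep id m A) :
    LinLamanIndep v m (v ⁻¹' A) := fun A' hA' hne ↦ by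
  have h := hA (v '' A') (Set.image_subset_iff.2 hA') (hne.image v)
  rwa [Set.ncard_image_of_injective _ hv, linRank, Set.image_id, ← linRank] at h

lemma insert {e : E} (hm : 1 < m) (hA : LinLamanIndep v m A)
    (h : ∀ I ⊆ A, v e ∈ span ℚ (v '' I) → I.ncard + 1 ≤ lamanBound m (linRank v I)) :
    LinLamanIndep v m (insert e A) := by
  intro A' hA' hne
  by_cases he : e ∈ A'
  · have hIA : A' \ {e} ⊆ A := by simpa [Set.sdiff_subset_iff] using hA'
    have hcard : A'.ncard ≤ (A' \ {e}).ncard + 1 := by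
      simpa [Set.insert_eq_of_mem he] using Set.ncard_insert_le e (A' \ {e})
    have hbound : (A' \ {e}).ncard + 1 ≤ lamanBound m (linRank v A') := by
      by_cases hspan : v e ∈ span ℚ (v '' (A' \ {e}))
      · exact (h _ hIA hspan).trans
          ((lamanBound_strictMono hm).monotone (linRank_mono Set.sdiff_subset))
      · exact Nat.succ_le_of_lt ((hA.mono hIA).ncard_le.trans_lt
          (lamanBound_strictMono hm (linRank_lt_of_notMem_span Set.sdiff_subset he hspan)))
    calc (A'.ncard : ℝ) ≤ ((A' \ {e}).ncard + 1 : ℕ) := by exact_mod_cast hcard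
      _ < m * linRank v A' := (le_lamanBound_iff (Nat.succ_ne_zero _)).1 hbound
  · exact hA A' ((Set.subset_insert_iff_of_notMem he).1 hA') hne

end LinLamanIndep

section Matroid

variable {E : Type*} [Finite E] {r : ℕ} {v : E → Fin r → ℚ} {m : ℝ} {N : Matroid E}

lemma eRk_le_lamanBound (hm : 0 ≤ m) (hN : ∀ A, N.Indep A ↔ LinLamanIndep v m A) (X : Set E) :
    N.eRk X ≤ lamanBound m (linRank v X) := by
  refine Matroid.eRk_le_iff.2 fun I hIX hI ↦ ?_
  rw [Set.encard_le_coe_iff_finite_ncard_le]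
  exact ⟨I.toFinite, ((hN I).1 hI).ncard_le.trans (lamanBound_mono hm (linRank_mono hIX))⟩

lemma ncard_add_ncard_le_of_matroid (hm : 0 ≤ m) (hN : ∀ A, N.Indep A ↔ LinLamanIndep v m A)
    {I J X Y : Set E} (hI : LinLamanIndep v m I) (hJ : LinLamanIndep v m J)
    (hIXY : I ⊆ X ∩ Y) (hJXY : J ⊆ X ∪ Y) :
    I.ncard + J.ncard ≤ lamanBound m (linRank v X) + lamanBound m (linRank v Y) := by
  have h : (I.ncard + J.ncard : ℕ∞) ≤
      lamanBound m (linRank v X) + lamanBound m (linRank v Y) :=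
    calc (I.ncard + J.ncard : ℕ∞) ≤ N.eRk (X ∩ Y) + N.eRk (X ∪ Y) := by
          rw [I.toFinite.cast_ncard_eq, J.toFinite.cast_ncard_eq]
          gcongr
          exacts [((hN I).2 hI).encard_le_eRk_of_subset hIXY,
            ((hN J).2 hJ).encard_le_eRk_of_subset hJXY]
      _ ≤ N.eRk X + N.eRk Y := N.eRk_submod X Y
      _ ≤ _ := add_le_add (eRk_le_lamanBound hm hN X) (eRk_le_lamanBound hm hN Y)
  exact_mod_cast h

end Matroid

section GenericVectors

lemma exists_mem_forall_mem_imp_le {K V : Type*} [DivisionRing K] [Infinite K] [AddCommGroup V]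
    [Module K V] (W : Submodule K V) {𝒰 : Set (Submodule K V)} (h𝒰 : 𝒰.Finite) :
    ∃ w ∈ W, ∀ U ∈ 𝒰, w ∈ U → W ≤ U := by
  by_contra! hcover
  have : Finite 𝒰 := h𝒰
  obtain ⟨U, hU⟩ := Subspace.exists_eq_top_of_iUnion_eq_univ
    (p := fun U : {U : 𝒰 // ¬ W ≤ U} ↦ comap W.subtype (U : Submodule K V)) <| by
      refine Set.eq_univ_of_forall fun w ↦ ?_
      obtain ⟨U, hU, hwU, hWU⟩ := hcover w w.2
      exact Set.mem_iUnion.2 ⟨⟨⟨U, hU⟩, hWU⟩, hwU⟩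
  exact U.2 (comap_subtype_eq_top.1 hU)

variable {r d p n : ℕ} {m : ℝ} {S : Set (Fin r → ℚ)} {U W : Submodule ℚ (Fin r → ℚ)}

lemma exists_insert_linLamanIndep (hm : 1 < m) (hS : LinLamanIndep id m S) (hfin : S.Finite)
    (hW : 1 < finrank ℚ W) (hWU : ¬ W ≤ U)
    (hSW : (S ∩ W).ncard + 1 ≤ lamanBound m (finrank ℚ W))
    (hcard : S.ncard + 1 ≤ lamanBound m (finrank ℚ W + 1)) :
    ∃ w ∈ W, w ∉ U ∧ w ∉ S ∧ LinLamanIndep id m (insert w S) := by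
  obtain ⟨w, hwW, hgen⟩ := exists_mem_forall_mem_imp_le W
    ((hfin.finite_subsets.image (span ℚ)).insert U)
  have hspan : ∀ I ⊆ S, w ∈ span ℚ I → W ≤ span ℚ I := fun I hI ↦
    hgen _ (Set.mem_insert_of_mem _ (Set.mem_image_of_mem _ hI))
  refine ⟨w, hwW, fun h ↦ hWU (hgen U (Set.mem_insert _ _) h), fun hwS ↦ ?_,
    hS.insert hm fun I hI hwI ↦ ?_⟩
  -- If `w ∈ S`, genericity puts `W` inside the line spanned by `w`.
  · have hline := hspan {w} (Set.singleton_subset_iff.2 hwS) (mem_span_singleton_self w)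
    exact hW.not_ge ((finrank_mono hline).trans (by simpa using finrank_span_le_card (R := ℚ) {w}))
  · rw [Set.image_id] at hwI
    rw [linRank, Set.image_id]
    have hWI := hspan I hI hwI
    have hmono := (lamanBound_strictMono hm).monotone
    by_cases hIW : I ⊆ W
    · calc I.ncard + 1 ≤ (S ∩ W).ncard + 1 := by
            gcongr
            exacts [hfin.inter_of_left _, Set.subset_inter hI hIW]
        _ ≤ lamanBound m (finrank ℚ W) := hSW
        _ ≤ lamanBound m (finrank ℚ (span ℚ I)) := hmono (finrank_mono hWI)
    · have hlt : W < span ℚ I := hWI.lt_of_not_ge fun h ↦ hIW (subset_span.trans h)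
      calc I.ncard + 1 ≤ S.ncard + 1 := by gcongr
        _ ≤ lamanBound m (finrank ℚ W + 1) := hcard
        _ ≤ lamanBound m (finrank ℚ (span ℚ I)) := hmono (finrank_lt_finrank_of_lt hlt)

lemma exists_union_linLamanIndep (hm : 1 < m) (hS : LinLamanIndep id m S) (hfin : S.Finite)
    (hW : 1 < finrank ℚ W) (hWU : ¬ W ≤ U)
    (hSW : (S ∩ W).ncard + n ≤ lamanBound m (finrank ℚ W))
    (hcard : S.ncard + n ≤ lamanBound m (finrank ℚ W + 1)) :
    ∃ T ⊆ (W : Set (Fin r → ℚ)), T.Finite ∧ T.ncard = n ∧ Disjoint T U ∧ Disjoint S T ∧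
      LinLamanIndep id m (S ∪ T) := by
  induction n with
  | zero => exact ⟨∅, by simpa using hS⟩
  | succ n ih =>
    obtain ⟨T, hTW, hTfin, hTn, hTU, hST, hind⟩ := ih (by omega) (by omega)
    have hunion := Set.ncard_union_le S T
    have hinter : ((S ∪ T) ∩ W).ncard ≤ (S ∩ W).ncard + n := by
      rw [Set.union_inter_distrib_right, Set.inter_eq_left.2 hTW, ← hTn]
      exact Set.ncard_union_le _ _
    obtain ⟨w, hwW, hwU, hwST, hins⟩ := exists_insert_linLamanIndep hm hind (hfin.union hTfin)
      hW hWU (by omega) (by omega)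
    rw [Set.mem_union, not_or] at hwST
    refine ⟨insert w T, Set.insert_subset hwW hTW, hTfin.insert w, ?_,
      Set.disjoint_insert_left.2 ⟨hwU, hTU⟩, Set.disjoint_insert_right.2 ⟨hwST.1, hST⟩, ?_⟩
    · rw [Set.ncard_insert_of_notMem hwST.2 hTfin, hTn]
    · rwa [Set.union_insert]

lemma exists_linLamanIndep_subset_union (hm : 1 < m) (hS : LinLamanIndep id m S) (hfin : S.Finite)
    (hSUW : S ⊆ (U : Set (Fin r → ℚ)) ∩ W) (hd : 1 < d) (hU : finrank ℚ U = d)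
    (hW : finrank ℚ W = d) (hUW : ¬ U ≤ W) (hn : S.ncard + n ≤ lamanBound m d)
    (hcard : S.ncard + 2 * n ≤ lamanBound m (d + 1)) :
    ∃ J ⊆ (U : Set (Fin r → ℚ)) ∪ W, J.Finite ∧ J.ncard = S.ncard + 2 * n ∧
      LinLamanIndep id m J := by
  have hWU : ¬ W ≤ (⊥ : Submodule ℚ (Fin r → ℚ)) := fun h ↦ by
    rw [le_bot_iff.1 h, finrank_bot] at hW
    omega
  obtain ⟨hSU, hSW⟩ := Set.subset_inter_iff.1 hSUW
  obtain ⟨A, hAU, hAfin, hAcard, hAW, hSA, hindA⟩ := exists_union_linLamanIndep (n := n) hm hS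
    hfin (W := U) (by omega) hUW (by rwa [Set.inter_eq_left.2 hSU, hU]) (by rw [hU]; omega)
  have hSAcard := Set.ncard_union_eq hSA hfin hAfin
  have hSAW : (S ∪ A) ∩ W = S := by
    rw [Set.union_inter_distrib_right, Set.inter_eq_left.2 hSW, hAW.inter_eq, Set.union_empty]
  obtain ⟨B, hBW, hBfin, hBcard, -, hSAB, hindB⟩ := exists_union_linLamanIndep (n := n) hm hindA
    (hfin.union hAfin) (by omega) hWU (by rwa [hSAW, hW]) (by rw [hW]; omega)
  refine ⟨S ∪ A ∪ B, Set.union_subset_union (Set.union_subset hSU hAU) hBW,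
    (hfin.union hAfin).union hBfin, ?_, hindB⟩
  rw [Set.ncard_union_eq hSAB (hfin.union hAfin) hBfin]
  omega

lemma exists_linLamanIndep_pair_of_not_concave (hm : 1 < m) (hp : 1 < p)
    (hUW : finrank ℚ (U ⊓ W : Submodule ℚ (Fin r → ℚ)) = p)
    (hU : finrank ℚ U = p + 1) (hW : finrank ℚ W = p + 1)
    (hconv : 2 * lamanBound m (p + 1) < lamanBound m p + lamanBound m (p + 2)) :
    ∃ I J : Set (Fin r → ℚ), I.Finite ∧ J.Finite ∧
      LinLamanIndep id m I ∧ LinLamanIndep id m J ∧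
      I ⊆ (U : Set (Fin r → ℚ)) ∩ W ∧ J ⊆ (U : Set (Fin r → ℚ)) ∪ W ∧
      2 * lamanBound m (p + 1) < I.ncard + J.ncard := by
  have hpos : p ≤ lamanBound m p := (lamanBound_strictMono hm).le_apply
  have hlt : lamanBound m p < lamanBound m (p + 1) := lamanBound_strictMono hm p.lt_succ_self
  have hUW_bot : ¬ U ⊓ W ≤ ⊥ := fun h ↦ by
    rw [le_bot_iff.1 h, finrank_bot] at hUW
    omega
  have hU_not_le : ¬ U ≤ W := fun h ↦ by
    rw [inf_eq_left.2 h] at hUW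
    omega
  obtain ⟨I, hIUW, hIfin, hIcard, -, -, hI⟩ := exists_union_linLamanIndep hm (.empty id m)
    Set.finite_empty (hp.trans_eq hUW.symm) hUW_bot (n := lamanBound m p)
    (by simp [hUW]) (by simpa [hUW] using hlt.le)
  rw [Set.empty_union] at hI
  -- Leaving out one vector of `I` makes room for one more in each of `U` and `W`.
  obtain ⟨I₀, hI₀I, hI₀card⟩ := Set.exists_subset_card_eq (s := I) (n := lamanBound m p - 1)
    (by omega)
  obtain ⟨J, hJUW, hJfin, hJcard, hJ⟩ := exists_linLamanIndep_subset_union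
    (n := lamanBound m (p + 1) - lamanBound m p + 1) hm (hI.mono hI₀I) (hIfin.subset hI₀I)
    (hI₀I.trans hIUW) (by omega) hU hW hU_not_le (by omega)
    (show _ ≤ lamanBound m (p + 2) by omega)
  exact ⟨I, J, hIfin, hJfin, hI, hJ, hIUW, hJUW, by omega⟩

end GenericVectors

lemma ncard_add_ncard_le_of_forall_matroid {r : ℕ} {m : ℝ} (hm : 0 ≤ m)
    (hmat : ∀ (n : ℕ) (v : Fin n → Fin r → ℚ),
      ∃ N : Matroid (Fin n), ∀ A, N.Indep A ↔ LinLamanIndep v m A)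
    {I J : Set (Fin r → ℚ)} (hIfin : I.Finite) (hJfin : J.Finite)
    (hI : LinLamanIndep id m I) (hJ : LinLamanIndep id m J) {U W : Submodule ℚ (Fin r → ℚ)}
    (hIUW : I ⊆ (U : Set (Fin r → ℚ)) ∩ W) (hJUW : J ⊆ (U : Set (Fin r → ℚ)) ∪ W) :
    I.ncard + J.ncard ≤ lamanBound m (finrank ℚ U) + lamanBound m (finrank ℚ W) := by
  obtain ⟨n, v, hv, hrange⟩ := (hIfin.union hJfin).fin_param
  obtain ⟨N, hN⟩ := hmat n v
  have hle := ncard_add_ncard_le_of_matroid hm hN (hI.preimage hv) (hJ.preimage hv)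
    (X := v ⁻¹' U) (Y := v ⁻¹' W) (Set.preimage_mono hIUW) (Set.preimage_mono hJUW)
  rw [Set.ncard_preimage_of_injective_subset_range hv (by simp [hrange]),
    Set.ncard_preimage_of_injective_subset_range hv (by simp [hrange])] at hle
  exact hle.trans (add_le_add (lamanBound_mono hm (linRank_le_finrank fun _ h ↦ h))
    (lamanBound_mono hm (linRank_le_finrank fun _ h ↦ h)))

lemma finrank_iInf_ker_proj (K : Type*) {ι : Type*} [Semiring K] [StrongRankCondition K]
    [Fintype ι] (J : Finset ι) :
    finrank K (⨅ i ∈ J, LinearMap.ker (LinearMap.proj i : (ι → K) →ₗ[K] K) : Submodule K (ι → K))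
      = Fintype.card ι - J.card := by
  classical
  have hequiv := (LinearMap.iInfKerProjEquiv K (fun _ ↦ K) (I := (J : Set ι)ᶜ) (J := (J : Set ι))
    disjoint_compl_left (Set.compl_union_self _).ge).finrank_eq
  rw [finrank_fintype_fun_eq_card, Fintype.card_compl_set] at hequiv
  exact hequiv.trans (by simp)

/-- **Theorem (for non-integral `m` the Laman complex need not be matroidal).**
If `m > 1` is a real number that is not an integer, then there are a positive
integer `r`, a finite index set `E = Fin n`, and vectors `v : Fin n → ℚ^r`
such that the `m`-Laman independent subsets of `E` for the matroid represented
by `v` are not the independent sets of any matroid on `E`. -/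
theorem laman_not_matroidal_of_not_int (m : ℝ) (hm : 1 < m)
    (hni : ∀ z : ℤ, (z : ℝ) ≠ m) :
    ∃ (r n : ℕ) (v : Fin n → (Fin r → ℚ)), 0 < r ∧
      ¬ ∃ N : Matroid (Fin n), N.E = Set.univ ∧
          ∀ A : Set (Fin n), (N.Indep A ↔ LinLamanIndep v m A) := by
  obtain ⟨p, hp, hconv⟩ := exists_lamanBound_not_concave (zero_le_one.trans hm.le) hni 2
  by_contra! hmat
  have hmatroidal : ∀ (n : ℕ) (v : Fin n → Fin (p + 2) → ℚ),
      ∃ N : Matroid (Fin n), ∀ A, N.Indep A ↔ LinLamanIndep v m A := fun n v ↦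
    (hmat (p + 2) n v (by omega)).imp fun _ h ↦ h.2
  let H (i : Fin (p + 2)) : Submodule ℚ (Fin (p + 2) → ℚ) := LinearMap.ker (LinearMap.proj i)
  have hH (i : Fin (p + 2)) : finrank ℚ (H i) = p + 1 := by
    rw [← Finset.iInf_singleton i H, finrank_iInf_ker_proj]
    simp
  have hinf : finrank ℚ (H 0 ⊓ H 1 : Submodule ℚ (Fin (p + 2) → ℚ)) = p := by
    rw [← Finset.iInf_singleton 1 H, ← Finset.iInf_insert, finrank_iInf_ker_proj]
    simp
  obtain ⟨I, J, hIfin, hJfin, hI, hJ, hIH, hJH, hlt⟩ :=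
    exists_linLamanIndep_pair_of_not_concave hm hp hinf (hH 0) (hH 1) hconv
  have hle := ncard_add_ncard_le_of_forall_matroid (zero_le_one.trans hm.le) hmatroidal hIfin hJfin
    hI hJ hIH hJH
  rw [hH, hH] at hle
  omega
end

section
/- Let M be a matroid on a finite ground set E with rank function r and closure operator cl, and let d be a positive integer. Then the following are equivalent: (i) E has a d-Edmonds decomposition; (ii) E is d-Laman independent, i.e., d · r(A) > |A| for every nonempty A ⊆ E; (iii) E is d-Recski independent, i.e., for every e ∈ E there exist independent sets J_1, …, J_d of M such that every element of E ∖ {e} belongs to exactly one of the J_j and e belongs to exactly two of the J_j (equivalently, the multiset E ∪ {e}, with e doubled, is partitioned into d independent sets). -/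
/-- The rank function of a matroid: the largest cardinality of an independent
subset of `A`. -/
noncomputable def Matroid.rankFun {α : Type*} (M : Matroid α) (A : Set α) : ℕ :=
  sSup (Set.ncard '' {I : Set α | M.Indep I ∧ I ⊆ A})

/-- A `d`-Edmonds decomposition of a matroid `M`: a partition of the ground set
into `d` independent sets `I 0, …, I (d-1)` such that there do not exist subsets
`I' j ⊆ I j`, not all empty, all having the same closure. -/
def Matroid.EdmondsDecomp {α : Type*} (M : Matroid α) (d : ℕ) (I : Fin d → Set α) : Prop :=
  (∀ j, M.Indep (I j)) ∧ (⋃ j, I j) = M.E ∧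
    (Pairwise fun j j' => Disjoint (I j) (I j')) ∧
    ¬ ∃ I' : Fin d → Set α, (∀ j, I' j ⊆ I j) ∧ (∃ j, (I' j).Nonempty) ∧
        ∀ j j', M.closure (I' j) = M.closure (I' j')

/-- `E` is `d`-Laman independent: `d · r(A) > |A|` for every nonempty `A ⊆ E`. -/
def Matroid.DLamanIndep {α : Type*} (M : Matroid α) (d : ℕ) : Prop :=
  ∀ A ⊆ M.E, A.Nonempty → A.ncard < d * M.rankFun A

/-- `E` is `d`-Recski independent: for every `e ∈ E` the multiset `E ∪ {e}`
(with `e` doubled) can be partitioned into `d` independent sets; i.e. there are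
independent sets `J 0, …, J (d-1)` such that each element of `E \ {e}` lies in
exactly one of them and `e` lies in exactly two of them. -/
def Matroid.RecskiIndep {α : Type*} (M : Matroid α) (d : ℕ) : Prop :=
  ∀ e ∈ M.E, ∃ J : Fin d → Set α, (∀ j, M.Indep (J j)) ∧
    (∀ x ∈ M.E \ {e}, ({j : Fin d | x ∈ J j}).ncard = 1) ∧
    ({j : Fin d | e ∈ J j}).ncard = 2

/-!
Counting an independent family `J₁, …, J_d` inside a finite set `A` with multiplicity gives
`∑_{x ∈ A} #{j | x ∈ J_j} = ∑_j |A ∩ J_j| ≤ d · r(A)`. If a single `e ∈ A` is covered twice, the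
left side is `|A| + 1`, so Recski independence implies Laman independence. If the `J_j` partition
the ground set, the left side is `|A|`, and equality holds exactly when every `A ∩ J_j` spans `A`:
a violation of Laman independence is the same thing as a common span of subsets of the parts.

Conversely, by the matroid partition theorem a finite family of elements splits into `d`
independent families as soon as each subfamily `K` has at most `d · r(K)` members. Laman
independence gives this for `E`, with a slack of one, hence also for `E` with one element doubled.
The partition theorem is proved in Rado's way: start with all `d` colours allowed everywhere and
delete them one at a time, preserving a Hall-type condition. If neither of two colours allowed at
`i` could be deleted, with violating sets `A` and `B`, then by submodularity `A ∪ B` or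
`(A ∩ B) \ {i}` would already have been violating.
-/

section HallRado

open scoped Finset

variable {ι κ : Type*} [Fintype κ] [DecidableEq κ] {r : κ → Finset ι → ℕ} {L : ι → Finset κ}

/-- The Hall–Rado condition on lists `L i` of admissible colours, where `r j` bounds the number of
elements that may receive colour `j`: no finite set `K` exceeds the total capacity left to it by
its lists. When each `r j` is the rank function of a matroid on `ι` and `L i = {c i}`, it says that
the colour class `c ⁻¹' {j}` is independent in the `j`-th matroid. -/
def HallRadoCondition (r : κ → Finset ι → ℕ) (L : ι → Finset κ) : Prop :=
  ∀ K : Finset ι, #K ≤ ∑ j, r j {i ∈ K | j ∈ L i}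

namespace HallRadoCondition

lemma nonempty (h : HallRadoCondition r L) (hr : ∀ j, r j ∅ = 0) (i : ι) : (L i).Nonempty := by
  by_contra hi
  simpa [Finset.filter_singleton, Finset.not_nonempty_iff_eq_empty.mp hi, hr] using h {i}

lemma card_le_of_forall_eq {c : ι → κ} (h : HallRadoCondition r fun i ↦ {c i})
    (hr : ∀ j, r j ∅ = 0) {K : Finset ι} {j : κ} (hK : ∀ i ∈ K, c i = j) : #K ≤ r j K := by
  have hne : ∀ j' ≠ j, r j' {i ∈ K | j' ∈ ({c i} : Finset κ)} = 0 := by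
    intro j' hj'
    rw [Finset.filter_eq_empty_iff.mpr, hr]
    intro i hi
    simpa [hK i hi] using hj'
  have heq : ({i ∈ K | j ∈ ({c i} : Finset κ)} : Finset ι) = K :=
    Finset.filter_true_of_mem fun i hi ↦ by simp [hK i hi]
  calc #K ≤ ∑ j', r j' {i ∈ K | j' ∈ ({c i} : Finset κ)} := h K
    _ = r j {i ∈ K | j ∈ ({c i} : Finset κ)} := Fintype.sum_eq_single j hne
    _ = r j K := by rw [heq]

variable [DecidableEq ι]

lemma mem_of_update_lt_card (h : HallRadoCondition r L) {i : ι} {s : Finset κ} {K : Finset ι}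
    (hK : ∑ j, r j {k ∈ K | j ∈ Function.update L i s k} < #K) : i ∈ K := by
  by_contra hi
  have hupdate : ∀ j, ({k ∈ K | j ∈ Function.update L i s k} : Finset ι) = {k ∈ K | j ∈ L k} :=
    fun j ↦ Finset.filter_congr fun k hk ↦ by
      rw [Function.update_of_ne (ne_of_mem_of_not_mem hk hi)]
  simp only [hupdate] at hK
  exact hK.not_ge (h K)

end HallRadoCondition

variable [DecidableEq ι]

-- Every colour of `L i` survives the removal of `x` or the removal of `y`.
lemma sum_filter_erase_inter_add_sum_filter_union_le (hmono : ∀ j, Monotone (r j))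
    (hsub : ∀ j A B, r j (A ∩ B) + r j (A ∪ B) ≤ r j A + r j B) {i : ι} {x y : κ} (hxy : x ≠ y)
    {A B : Finset ι} (hA : i ∈ A) (hB : i ∈ B) :
    ∑ j, r j {k ∈ (A ∩ B).erase i | j ∈ L k} + ∑ j, r j {k ∈ A ∪ B | j ∈ L k} ≤
      ∑ j, r j {k ∈ A | j ∈ Function.update L i ((L i).erase x) k} +
        ∑ j, r j {k ∈ B | j ∈ Function.update L i ((L i).erase y) k} := by
  simp only [← Finset.sum_add_distrib]
  refine Finset.sum_le_sum fun j _ ↦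
    (add_le_add (hmono j fun k hk ↦ ?_) (hmono j fun k hk ↦ ?_)).trans (hsub j _ _)
  · have hki : k ≠ i := (Finset.mem_erase.mp (Finset.mem_filter.mp hk).1).1
    simp only [Finset.mem_filter, Finset.mem_erase, Finset.mem_inter] at hk
    simp only [Finset.mem_inter, Finset.mem_filter, Function.update_of_ne hki]
    tauto
  · by_cases hki : k = i
    · subst hki
      have hj : j ∈ L k := (Finset.mem_filter.mp hk).2
      rw [Finset.mem_union]
      obtain hjx | hjy : j ≠ x ∨ j ≠ y := by
        by_contra! hj'
        exact hxy (hj'.1.symm.trans hj'.2)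
      · exact Or.inl (by simp [hA, hj, hjx])
      · exact Or.inr (by simp [hB, hj, hjy])
    · simpa only [Finset.mem_union, Finset.mem_filter, Function.update_of_ne hki, or_and_right]
        using hk

lemma HallRadoCondition.erase_or_erase (h : HallRadoCondition r L) (hmono : ∀ j, Monotone (r j))
    (hsub : ∀ j A B, r j (A ∩ B) + r j (A ∪ B) ≤ r j A + r j B) (i : ι) {x y : κ} (hxy : x ≠ y) :
    HallRadoCondition r (Function.update L i ((L i).erase x)) ∨
      HallRadoCondition r (Function.update L i ((L i).erase y)) := by
  by_contra! hviol
  simp only [HallRadoCondition, not_forall, not_le] at hviol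
  obtain ⟨⟨A, hA⟩, B, hB⟩ := hviol
  have hiA := h.mem_of_update_lt_card hA
  have hiB := h.mem_of_update_lt_card hB
  have hsum := sum_filter_erase_inter_add_sum_filter_union_le (L := L) hmono hsub hxy hiA hiB
  have hinter := h ((A ∩ B).erase i)
  have hunion := h (A ∪ B)
  have hcard := Finset.card_union_add_card_inter A B
  have herase := Finset.card_erase_add_one (Finset.mem_inter.mpr ⟨hiA, hiB⟩)
  lia

theorem HallRadoCondition.exists_coloring [Finite ι] (h : HallRadoCondition r L)
    (hr : ∀ j, r j ∅ = 0) (hmono : ∀ j, Monotone (r j))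
    (hsub : ∀ j A B, r j (A ∩ B) + r j (A ∪ B) ≤ r j A + r j B) :
    ∃ c : ι → κ, (∀ i, c i ∈ L i) ∧ HallRadoCondition r fun i ↦ {c i} := by
  cases nonempty_fintype ι
  obtain ⟨S, hSL, hS⟩ := exists_minimal_le_of_wellFoundedLT (HallRadoCondition r) L h
  have herase : ∀ i, ∀ x ∈ S i, ¬ HallRadoCondition r (Function.update S i ((S i).erase x)) := by
    intro i x hx hcond
    have hle := hS.le_of_le hcond (update_le_self_iff.mpr (Finset.erase_subset x (S i))) i
    rw [Function.update_self] at hle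
    exact Finset.notMem_erase x (S i) (hle hx)
  have hsingleton : ∀ i, ∃ x, S i = {x} := by
    intro i
    obtain ⟨x, hx⟩ := hS.prop.nonempty hr i
    refine ⟨x, Finset.eq_singleton_iff_unique_mem.mpr ⟨hx, fun y hy ↦ ?_⟩⟩
    by_contra hyx
    exact (hS.prop.erase_or_erase hmono hsub i hyx).elim (herase i y hy) (herase i x hx)
  choose c hc using hsingleton
  obtain rfl : S = fun i ↦ {c i} := funext hc
  exact ⟨c, fun i ↦ hSL i (Finset.mem_singleton_self (c i)), hS.prop⟩

end HallRado

section Rank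

variable {α : Type*} {M : Matroid α} {A B I J : Set α}

lemma cast_rankFun (hA : M.IsRkFinite A) : (M.rankFun A : ℕ∞) = M.eRk A := by
  obtain ⟨I, hI, hIfin⟩ := hA.exists_finite_isBasis'
  have hmax : IsGreatest (Set.ncard '' {J : Set α | M.Indep J ∧ J ⊆ A}) I.ncard := by
    refine ⟨⟨I, ⟨hI.indep, hI.subset⟩, rfl⟩, ?_⟩
    rintro _ ⟨J, ⟨hJ, hJA⟩, rfl⟩
    rw [← Nat.cast_le (α := ℕ∞), (hA.finite_of_indep_subset hJ hJA).cast_ncard_eq,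
      hIfin.cast_ncard_eq, ← hI.eRk_eq_encard]
    exact hJ.encard_le_eRk_of_subset hJA
  rw [Matroid.rankFun, hmax.csSup_eq, hIfin.cast_ncard_eq, hI.eRk_eq_encard]

lemma rankFun_empty : M.rankFun ∅ = 0 := by
  rw [← Nat.cast_inj (R := ℕ∞), cast_rankFun (.empty M), M.eRk_empty, Nat.cast_zero]

lemma rankFun_mono (hB : M.IsRkFinite B) (hAB : A ⊆ B) : M.rankFun A ≤ M.rankFun B := by
  rw [← Nat.cast_le (α := ℕ∞), cast_rankFun (hB.subset hAB), cast_rankFun hB]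
  exact M.eRk_mono hAB

lemma rankFun_inter_add_rankFun_union_le (hA : M.IsRkFinite A) (hB : M.IsRkFinite B) :
    M.rankFun (A ∩ B) + M.rankFun (A ∪ B) ≤ M.rankFun A + M.rankFun B := by
  rw [← Nat.cast_le (α := ℕ∞)]
  push_cast
  rw [cast_rankFun hA.inter_right, cast_rankFun (hA.union hB), cast_rankFun hA, cast_rankFun hB]
  exact M.eRk_inter_add_eRk_union_le A B

lemma rankFun_comap {ι : Type*} (f : ι → α) {K : Set ι} (hK : K.Finite) :
    (M.comap f).rankFun K = M.rankFun (f '' K) := by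
  rw [← Nat.cast_inj (R := ℕ∞), cast_rankFun (Matroid.isRkFinite_of_finite _ hK),
    cast_rankFun (M.isRkFinite_of_finite (hK.image f)), Matroid.eRk_comap]

lemma indep_of_ncard_le_rankFun (hA : A.Finite) (h : A.ncard ≤ M.rankFun A) : M.Indep A := by
  have hrk := M.isRkFinite_of_finite hA
  rw [← Nat.cast_le (α := ℕ∞), hA.cast_ncard_eq, cast_rankFun hrk] at h
  exact hrk.indep_of_encard_le_eRk h

lemma ncard_inter_le_rankFun (hA : M.IsRkFinite A) (hJ : M.Indep J) :
    (A ∩ J).ncard ≤ M.rankFun A := by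
  have hind : M.Indep (A ∩ J) := hJ.subset Set.inter_subset_right
  have hfin : (A ∩ J).Finite := hA.finite_of_indep_subset hind Set.inter_subset_left
  rw [← Nat.cast_le (α := ℕ∞), hfin.cast_ncard_eq, cast_rankFun hA]
  exact hind.encard_le_eRk_of_subset Set.inter_subset_left

lemma closure_eq_closure_of_rankFun_le_ncard (hA : M.IsRkFinite A) (hI : M.Indep I) (hIA : I ⊆ A)
    (h : M.rankFun A ≤ I.ncard) : M.closure I = M.closure A := by
  refine (hA.subset hIA).closure_eq_closure_of_subset_of_eRk_ge_eRk hIA ?_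
  rw [hI.eRk_eq_encard, ← cast_rankFun hA, ← (hA.finite_of_indep_subset hI hIA).cast_ncard_eq]
  exact Nat.cast_le.mpr h

lemma rankFun_le_ncard_of_subset_closure (hI : I.Finite) (hA : A ⊆ M.closure I) :
    M.rankFun A ≤ I.ncard := by
  have hrk : M.IsRkFinite A := (M.isRkFinite_of_finite hI).closure.subset hA
  rw [← Nat.cast_le (α := ℕ∞), cast_rankFun hrk, hI.cast_ncard_eq]
  calc M.eRk A ≤ M.eRk (M.closure I) := M.eRk_mono hA
    _ = M.eRk I := M.eRk_closure_eq I
    _ ≤ I.encard := M.eRk_le_encard I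

end Rank

section MatroidPartition

open scoped Finset

theorem exists_coloring_indep {ι κ : Type*} [Finite ι] [Fintype κ] (M : κ → Matroid ι)
    (h : ∀ K : Finset ι, #K ≤ ∑ j, (M j).rankFun K) :
    ∃ c : ι → κ, ∀ j, (M j).Indep (c ⁻¹' {j}) := by
  classical
  have hrk (j : κ) (K : Set ι) : (M j).IsRkFinite K := (M j).isRkFinite_of_finite K.toFinite
  have hr (j : κ) : (M j).rankFun ((∅ : Finset ι) : Set ι) = 0 := by
    rw [Finset.coe_empty, rankFun_empty]
  have hcond : HallRadoCondition (fun j K ↦ (M j).rankFun K) fun _ : ι ↦ Finset.univ := by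
    simpa [HallRadoCondition] using h
  obtain ⟨c, -, hc⟩ := hcond.exists_coloring hr
    (fun j A B hAB ↦ rankFun_mono (hrk j B) (Finset.coe_subset.mpr hAB))
    (fun j A B ↦ by
      simpa only [Finset.coe_inter, Finset.coe_union] using
        rankFun_inter_add_rankFun_union_le (hrk j A) (hrk j B))
  refine ⟨c, fun j ↦ indep_of_ncard_le_rankFun (Set.toFinite _) ?_⟩
  obtain ⟨K, hK⟩ := (c ⁻¹' {j}).toFinite.exists_finset_coe
  rw [← hK, Set.ncard_coe_finset]
  exact hc.card_le_of_forall_eq hr fun i hi ↦ hK.subset hi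

variable {α ι : Type*} {M : Matroid α} {d : ℕ} {f : ι → α}

theorem exists_coloring_indep_image [Finite ι]
    (h : ∀ K : Finset ι, K.Nonempty → #K ≤ d * M.rankFun (f '' K)) :
    ∃ c : ι → Fin d, ∀ j, M.Indep (f '' (c ⁻¹' {j})) ∧ Set.InjOn f (c ⁻¹' {j}) := by
  refine exists_coloring_indep (fun _ : Fin d ↦ M.comap f) fun K ↦ ?_
  obtain rfl | hK := K.eq_empty_or_nonempty
  · simp
  · simpa [rankFun_comap f K.finite_toSet] using h K hK

end MatroidPartition

section Counting

open scoped Finset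

variable {α ι κ : Type*}

lemma sum_ncard_inter [Fintype κ] (J : κ → Set α) (s : Finset α) :
    ∑ j, (↑s ∩ J j).ncard = ∑ x ∈ s, {j | x ∈ J j}.ncard := by
  classical
  convert Finset.sum_card_bipartiteAbove_eq_sum_card_bipartiteBelow
    (s := (Finset.univ : Finset κ)) (t := s) (fun j x ↦ x ∈ J j) using 2
  · rw [← Set.ncard_coe_finset, Finset.coe_bipartiteAbove]
    rfl
  · rw [← Set.ncard_coe_finset, Finset.coe_bipartiteBelow]
    simp

lemma ncard_setOf_mem_eq_one {I : κ → Set α} (hI : Pairwise fun j j' ↦ Disjoint (I j) (I j'))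
    {x : α} (hx : x ∈ ⋃ j, I j) : {j | x ∈ I j}.ncard = 1 := by
  obtain ⟨j, hj⟩ := Set.mem_iUnion.mp hx
  refine Set.ncard_eq_one.mpr ⟨j, Set.eq_singleton_iff_unique_mem.mpr ⟨hj, fun j' hj' ↦ ?_⟩⟩
  exact hI.eq (Set.not_disjoint_iff.mpr ⟨x, hj', hj⟩)

lemma sum_ncard_inter_of_pairwise_disjoint [Fintype κ] {I : κ → Set α}
    (hI : Pairwise fun j j' ↦ Disjoint (I j) (I j')) {A : Set α} (hA : A.Finite)
    (hAI : A ⊆ ⋃ j, I j) : ∑ j, (A ∩ I j).ncard = A.ncard := by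
  lift A to Finset α using hA
  rw [sum_ncard_inter, Set.ncard_coe_finset, Finset.card_eq_sum_ones]
  exact Finset.sum_congr rfl fun x hx ↦ ncard_setOf_mem_eq_one hI (hAI hx)

lemma ncard_setOf_mem_image_fiber {f : ι → α} {c : ι → κ} (h : ∀ j, Set.InjOn f (c ⁻¹' {j}))
    (x : α) : {j | x ∈ f '' (c ⁻¹' {j})}.ncard = (f ⁻¹' {x}).ncard := by
  have hset : {j | x ∈ f '' (c ⁻¹' {j})} = c '' (f ⁻¹' {x}) := by
    ext j
    simp [and_comm]
  have hinj : Set.InjOn c (f ⁻¹' {x}) := fun a ha b hb hab ↦ h (c b) hab rfl (ha.trans hb.symm)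
  rw [hset, hinj.ncard_image]

end Counting

section Equivalences

open scoped Finset

variable {α : Type*} {M : Matroid α} {d : ℕ}

theorem dLamanIndep_of_edmondsDecomp [M.Finite] {I : Fin d → Set α} (h : M.EdmondsDecomp d I) :
    M.DLamanIndep d := by
  obtain ⟨hind, hcover, hdisj, hno⟩ := h
  intro A hAE hA
  have hAfin := M.set_finite A hAE
  have hrk := M.isRkFinite_of_finite hAfin
  by_contra! hle
  have hbound : ∀ j ∈ Finset.univ, (A ∩ I j).ncard ≤ M.rankFun A :=
    fun j _ ↦ ncard_inter_le_rankFun hrk (hind j)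
  have hsum : ∑ j, (A ∩ I j).ncard = ∑ _j : Fin d, M.rankFun A := by
    refine (Finset.sum_le_sum hbound).antisymm ?_
    simpa [sum_ncard_inter_of_pairwise_disjoint hdisj hAfin (hcover ▸ hAE)] using hle
  have hspan (j : Fin d) : M.closure (A ∩ I j) = M.closure A :=
    closure_eq_closure_of_rankFun_le_ncard hrk ((hind j).subset Set.inter_subset_right)
      Set.inter_subset_left ((Finset.sum_eq_sum_iff_of_le hbound).mp hsum j (Finset.mem_univ j)).ge
  obtain ⟨x, hx⟩ := hA
  obtain ⟨j, hj⟩ := Set.mem_iUnion.mp (hcover ▸ hAE hx)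
  exact hno ⟨fun j ↦ A ∩ I j, fun j ↦ Set.inter_subset_right, ⟨j, x, hx, hj⟩,
    fun j j' ↦ (hspan j).trans (hspan j').symm⟩

theorem edmondsDecomp_of_dLamanIndep [M.Finite] (h : M.DLamanIndep d) {I : Fin d → Set α}
    (hind : ∀ j, M.Indep (I j)) (hcover : ⋃ j, I j = M.E)
    (hdisj : Pairwise fun j j' ↦ Disjoint (I j) (I j')) : M.EdmondsDecomp d I := by
  refine ⟨hind, hcover, hdisj, ?_⟩
  rintro ⟨I', hI', ⟨j₀, hne⟩, hcl⟩
  have hground (j : Fin d) : I' j ⊆ M.E := (hI' j).trans (hind j).subset_ground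
  have hUE : ⋃ j, I' j ⊆ M.E := Set.iUnion_subset hground
  have hspan (j : Fin d) : ⋃ k, I' k ⊆ M.closure (I' j) :=
    Set.iUnion_subset fun k ↦ hcl j k ▸ M.subset_closure (I' k) (hground k)
  have hrank (j : Fin d) : M.rankFun (⋃ k, I' k) ≤ (I' j).ncard :=
    rankFun_le_ncard_of_subset_closure (M.set_finite _ (hground j)) (hspan j)
  have hsum : ∑ j, (I' j).ncard = (⋃ k, I' k).ncard := by
    have hdisj' : Pairwise fun j j' ↦ Disjoint (I' j) (I' j') :=
      fun j j' hjj' ↦ (hdisj hjj').mono (hI' j) (hI' j')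
    simpa only [Set.inter_eq_self_of_subset_right (Set.subset_iUnion I' _)] using
      sum_ncard_inter_of_pairwise_disjoint hdisj' (M.set_finite _ hUE) subset_rfl
  refine (h _ hUE (hne.mono (Set.subset_iUnion I' j₀))).not_ge ?_
  calc d * M.rankFun (⋃ k, I' k) = ∑ _j : Fin d, M.rankFun (⋃ k, I' k) := by simp
    _ ≤ ∑ j, (I' j).ncard := Finset.sum_le_sum fun j _ ↦ hrank j
    _ = (⋃ k, I' k).ncard := hsum

theorem exists_edmondsDecomp_of_dLamanIndep [M.Finite] (h : M.DLamanIndep d) :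
    ∃ I : Fin d → Set α, M.EdmondsDecomp d I := by
  have : Finite M.E := M.ground_finite
  obtain ⟨c, hc⟩ := exists_coloring_indep_image (M := M) (d := d) (f := ((↑) : M.E → α)) <| by
    intro K hK
    have hlt := h ((↑) '' (K : Set M.E)) (Subtype.coe_image_subset _ _) (hK.to_set.image _)
    rw [Set.ncard_image_of_injective _ Subtype.val_injective, Set.ncard_coe_finset] at hlt
    exact hlt.le
  refine ⟨fun j ↦ (↑) '' (c ⁻¹' {j}), edmondsDecomp_of_dLamanIndep h (fun j ↦ (hc j).1) ?_ ?_⟩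
  · rw [← Set.image_iUnion, ← Set.preimage_iUnion, Set.iUnion_of_singleton, Set.preimage_univ,
      Subtype.coe_image_univ]
  · exact fun j j' hjj' ↦ (Set.disjoint_image_iff Subtype.val_injective).mpr
      ((Set.disjoint_singleton.mpr hjj').preimage c)

/-- The family of the elements of `s` in which `e` is listed once more, as the image of `none`. -/
def withExtraCopy (s : Set α) (e : α) (o : Option s) : α := o.elim e (↑)

lemma card_le_ncard_image_withExtraCopy_add_one {s : Set α} (e : α) (K : Finset (Option s)) :
    #K ≤ (withExtraCopy s e '' K).ncard + 1 := by
  have hsub : (↑) '' (K.eraseNone : Set s) ⊆ withExtraCopy s e '' K := by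
    rintro _ ⟨x, hx, rfl⟩
    exact ⟨some x, Finset.mem_eraseNone.mp hx, rfl⟩
  calc #K ≤ #K.eraseNone + 1 := by
        classical
        rw [Finset.card_eraseNone_eq_card_erase, ← Nat.sub_le_iff_le_add]
        exact Finset.pred_card_le_card_erase
    _ = ((↑) '' (K.eraseNone : Set s) : Set α).ncard + 1 := by
      rw [Set.ncard_image_of_injective _ Subtype.val_injective, Set.ncard_coe_finset]
    _ ≤ (withExtraCopy s e '' K).ncard + 1 := by
      gcongr
      exact Set.toFinite _

lemma withExtraCopy_preimage_of_ne {s : Set α} {e x : α} (hx : x ∈ s) (hxe : x ≠ e) :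
    withExtraCopy s e ⁻¹' {x} = {some ⟨x, hx⟩} := by
  ext (_ | y) <;> simp [withExtraCopy, Subtype.ext_iff, hxe.symm]

lemma withExtraCopy_preimage_self {s : Set α} {e : α} (he : e ∈ s) :
    withExtraCopy s e ⁻¹' {e} = {none, some ⟨e, he⟩} := by
  ext (_ | y) <;> simp [withExtraCopy, Subtype.ext_iff]

theorem recskiIndep_of_dLamanIndep [M.Finite] (h : M.DLamanIndep d) : M.RecskiIndep d := by
  intro e he
  have : Finite M.E := M.ground_finite
  obtain ⟨c, hc⟩ := exists_coloring_indep_image (M := M) (d := d) (f := withExtraCopy M.E e) <| by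
    intro K hK
    have himage : withExtraCopy M.E e '' K ⊆ M.E := by
      rintro _ ⟨_ | x, -, rfl⟩
      exacts [he, x.2]
    have hlt := h _ himage (hK.to_set.image _)
    exact (card_le_ncard_image_withExtraCopy_add_one e K).trans hlt
  refine ⟨fun j ↦ withExtraCopy M.E e '' (c ⁻¹' {j}), fun j ↦ (hc j).1, ?_, ?_⟩
  · rintro x ⟨hx, hxe⟩
    rw [ncard_setOf_mem_image_fiber (fun j ↦ (hc j).2), withExtraCopy_preimage_of_ne hx hxe,
      Set.ncard_singleton]
  · rw [ncard_setOf_mem_image_fiber (fun j ↦ (hc j).2), withExtraCopy_preimage_self he,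
      Set.ncard_pair (Option.some_ne_none _).symm]

theorem dLamanIndep_of_recskiIndep [M.Finite] (h : M.RecskiIndep d) : M.DLamanIndep d := by
  classical
  rintro A hAE ⟨e, he⟩
  obtain ⟨J, hind, hone, htwo⟩ := h e (hAE he)
  have hrk := M.isRkFinite_of_finite (M.set_finite A hAE)
  lift A to Finset α using M.set_finite A hAE
  have hmult : ∑ x ∈ A.erase e, {j | x ∈ J j}.ncard = #(A.erase e) := by
    rw [Finset.card_eq_sum_ones]
    refine Finset.sum_congr rfl fun x hx ↦ ?_
    obtain ⟨hxe, hxA⟩ := Finset.mem_erase.mp hx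
    exact hone x ⟨hAE hxA, hxe⟩
  refine Nat.lt_of_succ_le ?_
  calc (A : Set α).ncard + 1 = #(A.erase e) + 2 := by
        rw [Set.ncard_coe_finset, ← Finset.card_erase_add_one he]
    _ = ∑ x ∈ A, {j | x ∈ J j}.ncard := by rw [← Finset.sum_erase_add A _ he, hmult, htwo]
    _ = ∑ j, (↑A ∩ J j).ncard := (sum_ncard_inter J A).symm
    _ ≤ ∑ _j : Fin d, M.rankFun A :=
        Finset.sum_le_sum fun j _ ↦ ncard_inter_le_rankFun hrk (hind j)
    _ = d * M.rankFun A := by simp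

end Equivalences

/-- **Theorem (equivalence of Edmonds, Laman and Recski independence).**
For a matroid `M` on a finite ground set and a positive integer `d`, the
following are equivalent: (i) `M` has a `d`-Edmonds decomposition;
(ii) the ground set is `d`-Laman independent; (iii) the ground set is
`d`-Recski independent. -/
theorem edmonds_laman_recski_equiv {α : Type*} (M : Matroid α) (hfin : M.E.Finite)
    (d : ℕ) (hd : 0 < d) :
    ((∃ I : Fin d → Set α, M.EdmondsDecomp d I) ↔ M.DLamanIndep d) ∧
      (M.DLamanIndep d ↔ M.RecskiIndep d) := by
  have : M.Finite := ⟨hfin⟩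
  exact ⟨⟨fun ⟨_, hI⟩ ↦ dLamanIndep_of_edmondsDecomp hI, exists_edmondsDecomp_of_dLamanIndep⟩,
    recskiIndep_of_dLamanIndep, dLamanIndep_of_recskiIndep⟩
end

section
/- Let F be a field, d ≥ 2 an integer, and v_1, …, v_n ∈ F^r. Let g : F^r → F^r be an invertible F-linear map and c_1, …, c_n ∈ F nonzero scalars, and set v'_i = g(c_i · v_i) for i = 1,…,n. Then for every A ⊆ {1,…,n}, A is d-rigidity independent with respect to the vectors v_1,…,v_n if and only if A is d-rigidity independent with respect to the vectors v'_1,…,v'_n. (The d-rigidity matroid is a projective invariant of the representation.) -/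
open scoped TensorProduct

/-- The field `K = F(Φ)` of rational functions over `F` in the `d·r` entries
`Φ_{st}` of a generic `d × r` matrix. -/
abbrev GenericField (F : Type*) [Field F] (d r : ℕ) : Type _ :=
  FractionRing (MvPolynomial (Fin d × Fin r) F)

/-- The rigidity vector `w ⊗ Φ(w) ∈ K^r ⊗_K K^d` attached to a vector
`w ∈ F^r`, where `Φ : K^r → K^d` is the generic linear map with matrix entries
the indeterminates `Φ_{st}`, so that `Φ(w) s = Σ_t Φ_{st} · w t`. -/
noncomputable def rigidityVec (F : Type*) [Field F] (d r : ℕ) (w : Fin r → F) :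
    TensorProduct (GenericField F d r)
      (Fin r → GenericField F d r) (Fin d → GenericField F d r) :=
  (fun t => algebraMap (MvPolynomial (Fin d × Fin r) F) (GenericField F d r)
      (MvPolynomial.C (w t))) ⊗ₜ[GenericField F d r]
    (fun s => ∑ t, algebraMap (MvPolynomial (Fin d × Fin r) F) (GenericField F d r)
      (MvPolynomial.X (s, t) * MvPolynomial.C (w t)))

/-- A subset `A ⊆ {1,…,n}` is `d`-rigidity independent (with respect to the
representing vectors `v : Fin n → F^r`) if the vectors
`{v i ⊗ Φ(v i) : i ∈ A} ⊆ K^r ⊗_K K^d` are `K`-linearly independent, where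
`K = F(Φ)` and `Φ` is the generic `d × r` matrix. -/
def RigidityIndep (F : Type*) [Field F] (d r n : ℕ) (v : Fin n → (Fin r → F))
    (A : Set (Fin n)) : Prop :=
  LinearIndependent (GenericField F d r) (fun i : A => rigidityVec F d r (v i))

/-!
The substitution `Φ ↦ Φ U`, for `U` the matrix of `g`, is an automorphism `σ` of `K = F(Φ)` over
`F`, and it turns `Φ(w)` into `Φ(g w)`. Hence applying `σ` to all coordinates and then `U` to the
first tensor factor is a `σ`-semilinear map `K^r ⊗ K^d → K^r ⊗ K^d` sending `w ⊗ Φ(w)` to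
`g w ⊗ Φ(g w)`, so it carries linear relations between the rigidity vectors of the `v i` to linear
relations between those of the `g (v i)`. Rescaling `w` by `c` only rescales `w ⊗ Φ(w)` by `c ^ 2`.
-/

open Matrix
open scoped MatrixGroups

section Semilinear

variable {R S : Type*} [Semiring R] [Semiring S]

theorem linearIndependent_of_semilinearMap_comp {σ : R →+* S} {ι M N : Type*} [AddCommMonoid M]
    [AddCommMonoid N] [Module R M] [Module S N] (hσ : Function.Injective σ) (f : M →ₛₗ[σ] N)
    {v : ι → M} (hfv : LinearIndependent S (f ∘ v)) : LinearIndependent R v := by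
  rw [linearIndependent_iff'ₛ] at hfv ⊢
  intro s a b relation i hi
  have image_relation : ∑ j ∈ s, σ (a j) • f (v j) = ∑ j ∈ s, σ (b j) • f (v j) := by
    simpa only [map_sum, map_smulₛₗ] using congrArg f relation
  exact hσ (hfv s (σ ∘ a) (σ ∘ b) image_relation i hi)

/-- The semilinear map `(ι → R) → (ι → S)` applying a ring homomorphism to each coordinate. -/
def coordwiseSemilinearMap (ι : Type*) (σ : R →+* S) : (ι → R) →ₛₗ[σ] (ι → S) where
  toFun x := σ ∘ x
  map_add' x y := funext fun i => map_add σ (x i) (y i)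
  map_smul' a x := funext fun i => map_mul σ a (x i)

end Semilinear

section Substitution

theorem algHom_ext_mvPolynomialX {m n R S : Type*} [CommSemiring R] [Semiring S] [Algebra R S]
    {f g : MvPolynomial (m × n) R →ₐ[R] S}
    (h : (mvPolynomialX m n R).map f = (mvPolynomialX m n R).map g) : f = g :=
  MvPolynomial.algHom_ext fun p => congrFun₂ h p.1 p.2

variable (m : Type*) {n k l R : Type*} [Fintype k] [CommSemiring R]

/-- The substitution `Φ ↦ Φ' M` in polynomials in the entries of the generic `m × n` matrix `Φ`,
where `Φ'` is the generic `m × k` matrix. -/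
noncomputable def genericMatrixSubst (M : Matrix k n R) :
    MvPolynomial (m × n) R →ₐ[R] MvPolynomial (m × k) R :=
  MvPolynomial.aeval fun p =>
    (mvPolynomialX m k R * M.map (algebraMap R (MvPolynomial (m × k) R))) p.1 p.2

theorem mvPolynomialX_map_genericMatrixSubst (M : Matrix k n R) :
    (mvPolynomialX m n R).map (genericMatrixSubst m M) =
      mvPolynomialX m k R * M.map (algebraMap R (MvPolynomial (m × k) R)) :=
  ext fun _ _ => MvPolynomial.aeval_X _ _

theorem genericMatrixSubst_one [DecidableEq k] :
    genericMatrixSubst m (1 : Matrix k k R) = AlgHom.id R _ :=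
  algHom_ext_mvPolynomialX <| by
    rw [mvPolynomialX_map_genericMatrixSubst, Matrix.map_one _ (map_zero _) (map_one _),
      Matrix.mul_one]
    rfl

theorem genericMatrixSubst_comp [Fintype l] (N : Matrix l k R) (M : Matrix k n R) :
    (genericMatrixSubst m N).comp (genericMatrixSubst m M) = genericMatrixSubst m (N * M) := by
  refine algHom_ext_mvPolynomialX ?_
  have subst_const : (M.map (algebraMap R (MvPolynomial (m × k) R))).map (genericMatrixSubst m N) =
      M.map (algebraMap R (MvPolynomial (m × l) R)) :=
    ext fun _ _ => (genericMatrixSubst m N).commutes _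
  rw [AlgHom.coe_comp, ← Matrix.map_map, mvPolynomialX_map_genericMatrixSubst, Matrix.map_mul,
    mvPolynomialX_map_genericMatrixSubst, subst_const, mvPolynomialX_map_genericMatrixSubst,
    Matrix.map_mul, Matrix.mul_assoc]

/-- The substitution `Φ ↦ Φ U` for an invertible matrix `U`, as an automorphism of the
polynomial ring in the entries of `Φ`. -/
noncomputable def genericMatrixSubstEquiv [DecidableEq k] (U : (Matrix k k R)ˣ) :
    MvPolynomial (m × k) R ≃ₐ[R] MvPolynomial (m × k) R :=
  AlgEquiv.ofAlgHom (genericMatrixSubst m U.val) (genericMatrixSubst m U⁻¹.val)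
    (by rw [genericMatrixSubst_comp, U.mul_inv, genericMatrixSubst_one])
    (by rw [genericMatrixSubst_comp, U.inv_mul, genericMatrixSubst_one])

end Substitution

section RigidityVectors

variable {F : Type*} [Field F] {d r : ℕ}

local notation "K" => GenericField F d r

variable (F d r) in
/-- The generic matrix `Φ`, with entries in the field `K = F(Φ)`. -/
noncomputable def genericMatrix : Matrix (Fin d) (Fin r) K :=
  (mvPolynomialX (Fin d) (Fin r) F).map (algebraMap _ K)

variable (d) in
/-- The automorphism of `K = F(Φ)` over `F` given by the substitution `Φ ↦ Φ U`. -/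
noncomputable def genericFieldAut (U : GL (Fin r) F) : K ≃ₐ[F] K :=
  IsFractionRing.fieldEquivOfAlgEquiv F _ _ (genericMatrixSubstEquiv (Fin d) U)

theorem genericMatrix_map_genericFieldAut (U : GL (Fin r) F) :
    (genericMatrix F d r).map (genericFieldAut d U) =
      genericMatrix F d r * U.val.map (algebraMap F K) := by
  let toK := algebraMap (MvPolynomial (Fin d × Fin r) F) K
  calc (genericMatrix F d r).map (genericFieldAut d U)
    _ = ((mvPolynomialX (Fin d) (Fin r) F).map (genericMatrixSubst (Fin d) U.val)).map toK :=
      ext fun s t => IsFractionRing.fieldEquivOfAlgEquiv_algebraMap F K K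
        (genericMatrixSubstEquiv (Fin d) U) (MvPolynomial.X (s, t))
    _ = genericMatrix F d r * U.val.map (algebraMap F K) := by
      rw [mvPolynomialX_map_genericMatrixSubst, Matrix.map_mul]
      rfl

theorem rigidityVec_eq_tmul_mulVec (w : Fin r → F) :
    rigidityVec F d r w = (algebraMap F K ∘ w) ⊗ₜ[K]
      (genericMatrix F d r *ᵥ (algebraMap F K ∘ w)) := by
  simp only [rigidityVec, map_mul]
  rfl

theorem rigidityVec_smul (a : F) (w : Fin r → F) :
    rigidityVec F d r (a • w) = algebraMap F K (a ^ 2) • rigidityVec F d r w := by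
  have coord_smul : algebraMap F K ∘ (a • w) = algebraMap F K a • (algebraMap F K ∘ w) :=
    funext fun t => map_mul _ a (w t)
  rw [rigidityVec_eq_tmul_mulVec, rigidityVec_eq_tmul_mulVec, coord_smul, mulVec_smul,
    TensorProduct.smul_tmul_smul, pow_two, map_mul]

variable (d) in
/-- The map `x ⊗ y ↦ U (σ x) ⊗ σ y` on `K^r ⊗ K^d`, where `σ` is the automorphism `Φ ↦ Φ U`. -/
noncomputable def rigidityTwist (U : GL (Fin r) F) :
    (Fin r → K) ⊗[K] (Fin d → K) →ₛₗ[(genericFieldAut d U : K →+* K)]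
      (Fin r → K) ⊗[K] (Fin d → K) :=
  TensorProduct.map
    ((U.val.map (algebraMap F K)).mulVecLin ∘ₛₗ
      coordwiseSemilinearMap (Fin r) (genericFieldAut d U : K →+* K))
    (coordwiseSemilinearMap (Fin d) (genericFieldAut d U : K →+* K))

theorem rigidityTwist_rigidityVec (U : GL (Fin r) F) (w : Fin r → F) :
    rigidityTwist d U (rigidityVec F d r w) = rigidityVec F d r (U.val *ᵥ w) := by
  let toK := algebraMap F K
  let σ : K →+* K := genericFieldAut d U
  have fix_coords : σ ∘ toK ∘ w = toK ∘ w :=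
    funext fun t => (genericFieldAut d U).commutes (w t)
  have base_change : toK ∘ (U.val *ᵥ w) = U.val.map toK *ᵥ (toK ∘ w) :=
    funext fun t => RingHom.map_mulVec toK U.val w t
  have twist_image : σ ∘ (genericMatrix F d r *ᵥ (toK ∘ w)) =
      genericMatrix F d r *ᵥ (U.val.map toK *ᵥ (toK ∘ w)) :=
    calc σ ∘ (genericMatrix F d r *ᵥ (toK ∘ w))
      _ = (genericMatrix F d r).map σ *ᵥ (σ ∘ toK ∘ w) :=
        funext fun s => RingHom.map_mulVec σ _ _ s
      _ = (genericMatrix F d r * U.val.map toK) *ᵥ (toK ∘ w) := by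
        rw [fix_coords]
        exact congrArg (· *ᵥ (toK ∘ w)) (genericMatrix_map_genericFieldAut U)
      _ = genericMatrix F d r *ᵥ (U.val.map toK *ᵥ (toK ∘ w)) := (mulVec_mulVec _ _ _).symm
  calc rigidityTwist d U (rigidityVec F d r w)
    _ = (U.val.map toK *ᵥ (σ ∘ toK ∘ w)) ⊗ₜ (σ ∘ (genericMatrix F d r *ᵥ (toK ∘ w))) := by
      rw [rigidityVec_eq_tmul_mulVec]
      rfl
    _ = rigidityVec F d r (U.val *ᵥ w) := by
      rw [fix_coords, twist_image, ← base_change, rigidityVec_eq_tmul_mulVec]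

variable {ι : Type*}

theorem linearIndependent_rigidityVec_of_mulVec (U : GL (Fin r) F) {v : ι → Fin r → F}
    (h : LinearIndependent K fun i => rigidityVec F d r (U.val *ᵥ v i)) :
    LinearIndependent K fun i => rigidityVec F d r (v i) := by
  have twist_family : rigidityTwist d U ∘ (fun i => rigidityVec F d r (v i)) =
      fun i => rigidityVec F d r (U.val *ᵥ v i) :=
    funext fun i => rigidityTwist_rigidityVec U (v i)
  exact linearIndependent_of_semilinearMap_comp (genericFieldAut d U).injective
    (rigidityTwist d U) (twist_family ▸ h)

theorem linearIndependent_rigidityVec_mulVec_iff (U : GL (Fin r) F) (v : ι → Fin r → F) :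
    (LinearIndependent K fun i => rigidityVec F d r (U.val *ᵥ v i)) ↔
      LinearIndependent K fun i => rigidityVec F d r (v i) := by
  refine ⟨linearIndependent_rigidityVec_of_mulVec U, fun h => ?_⟩
  refine linearIndependent_rigidityVec_of_mulVec U⁻¹ ?_
  simpa only [mulVec_mulVec, U.inv_mul, one_mulVec] using h

theorem linearIndependent_rigidityVec_smul_iff {c : ι → F} (hc : ∀ i, c i ≠ 0)
    (v : ι → Fin r → F) :
    (LinearIndependent K fun i => rigidityVec F d r (c i • v i)) ↔
      LinearIndependent K fun i => rigidityVec F d r (v i) := by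
  have square_ne_zero (i : ι) : algebraMap F K (c i ^ 2) ≠ 0 := by simpa using hc i
  simp only [rigidityVec_smul]
  exact LinearIndependent.units_smul_iff _ fun i => Units.mk0 _ (square_ne_zero i)

theorem rigidity_projective_invariance_general (v : ι → Fin r → F)
    (g : (Fin r → F) ≃ₗ[F] (Fin r → F)) {c : ι → F} (hc : ∀ i, c i ≠ 0) :
    (LinearIndependent K fun i => rigidityVec F d r (v i)) ↔
      LinearIndependent K fun i => rigidityVec F d r (g (c i • v i)) := by
  let U : GL (Fin r) F :=
    GeneralLinearGroup.toLin.symm (LinearMap.GeneralLinearGroup.ofLinearEquiv g)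
  have U_mulVec (w : Fin r → F) : U.val *ᵥ w = g w := LinearMap.toMatrix'_mulVec g.toLinearMap w
  simp only [← U_mulVec]
  rw [linearIndependent_rigidityVec_mulVec_iff, linearIndependent_rigidityVec_smul_iff hc]

end RigidityVectors

/-- **Proposition (projective invariance of the rigidity matroid).**
Let `F` be a field, `d ≥ 2`, and `v 1, …, v n ∈ F^r`.  If `g : F^r → F^r` is an
invertible linear map and `c 1, …, c n` are nonzero scalars, then a subset
`A ⊆ {1,…,n}` is `d`-rigidity independent with respect to `v 1, …, v n` if and
only if it is `d`-rigidity independent with respect to the projectively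
equivalent vectors `v' i = g (c i • v i)`. -/
theorem rigidity_projective_invariance (F : Type*) [Field F] (d r n : ℕ)
    (hd : 2 ≤ d) (v : Fin n → (Fin r → F))
    (g : (Fin r → F) ≃ₗ[F] (Fin r → F)) (c : Fin n → F) (hc : ∀ i, c i ≠ 0)
    (A : Set (Fin n)) :
    RigidityIndep F d r n v A ↔
      RigidityIndep F d r n (fun i => g (c i • v i)) A :=
  rigidity_projective_invariance_general (fun i : A => v i) g fun i => hc i
end
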